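/- If K: X × X → ℝ is a positive semidefinite kernel, then the kernel K̃(x,z) = exp(K(x,z)) is also positive semidefinite. -/

import Mathlib

def IsPSDKernel {X : Type*} (K : X → X → ℝ) : Prop :=
  (∀ x z, K x z = K z x) ∧
  ∀ (n : ℕ) (x : Fin n → X) (a : Fin n → ℝ),
    0 ≤ ∑ i, ∑ j, a i * a j * K (x i) (x j)

/-!
Entrywise powers of a positive semidefinite matrix are positive semidefinite by the Schur product
theorem, and positive semidefinite matrices form a closed convex cone. Hence applying entrywise a
power series with nonnegative coefficients, such as the exponential series, preserves positive
semidefiniteness. A kernel is treated as a matrix whose index type is the possibly infinite `X`.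
-/

open scoped ComplexOrder Matrix Nat

theorem isClosed_setOf_posSemidef {n R : Type*} [Ring R] [PartialOrder R] [StarRing R]
    [TopologicalSpace R] [IsTopologicalSemiring R] [ContinuousStar R] [OrderClosedTopology R] :
    IsClosed {A : Matrix n n R | A.PosSemidef} := by
  have isClosed_isHermitian : IsClosed {A : Matrix n n R | A.IsHermitian} :=
    isClosed_eq continuous_id.matrix_conjTranspose continuous_id
  have isClosed_nonneg (v : n →₀ R) : IsClosed {A : Matrix n n R |
      0 ≤ v.sum fun i vi ↦ v.sum fun j vj ↦ star vi * A i j * vj} := by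
    refine isClosed_le continuous_const ?_
    unfold Finsupp.sum
    fun_prop
  refine isClosed_isHermitian.and ?_
  simpa only [Set.ofPred_forall] using isClosed_iInter isClosed_nonneg

theorem posSemidef_of_hasSum {ι n R : Type*} [Ring R] [PartialOrder R] [StarRing R]
    [AddLeftMono R] [TopologicalSpace R] [IsTopologicalSemiring R] [ContinuousStar R]
    [OrderClosedTopology R] {A : ι → Matrix n n R} {B : Matrix n n R}
    (hA : ∀ i, (A i).PosSemidef) (hB : HasSum A B) : B.PosSemidef :=
  isClosed_setOf_posSemidef.mem_of_tendsto hB <|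
    .of_forall fun s ↦ Matrix.posSemidef_sum s fun i _ ↦ hA i

theorem posSemidef_const_one {n R : Type*} [Ring R] [PartialOrder R] [StarRing R]
    [StarOrderedRing R] : (Matrix.of fun _ _ : n ↦ (1 : R)).PosSemidef :=
  (Matrix.PosSemidef.one (n := Unit)).submatrix fun _ ↦ ()

section RCLike

variable {n 𝕜 : Type*} [RCLike 𝕜] {A : Matrix n n 𝕜}

theorem posSemidef_map_pow (hA : A.PosSemidef) (k : ℕ) : (A.map (· ^ k)).PosSemidef := by
  induction k with
  | zero =>
    have map_pow_zero : A.map (· ^ 0) = Matrix.of fun _ _ ↦ 1 := by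
      ext; simp
    exact map_pow_zero ▸ posSemidef_const_one
  | succ k ih =>
    have map_pow_succ : A.map (· ^ (k + 1)) = A.map (· ^ k) ⊙ A := by
      ext; simp [pow_succ]
    exact map_pow_succ ▸ ih.hadamard hA

theorem posSemidef_map_of_hasSum_pow (hA : A.PosSemidef) {c : ℕ → ℝ} (hc : ∀ k, 0 ≤ c k)
    {f : 𝕜 → 𝕜} (hf : ∀ i j, HasSum (fun k ↦ c k • A i j ^ k) (f (A i j))) :
    (A.map f).PosSemidef := by
  have hasSum_map : HasSum (fun k ↦ c k • A.map (· ^ k)) (A.map f) :=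
    Pi.hasSum.2 fun i ↦ Pi.hasSum.2 fun j ↦ hf i j
  exact posSemidef_of_hasSum (fun k ↦ (posSemidef_map_pow hA k).smul (hc k)) hasSum_map

end RCLike

theorem IsPSDKernel.sum_finset_nonneg {X : Type*} {K : X → X → ℝ} (hK : IsPSDKernel K)
    (s : Finset X) (a : X → ℝ) : 0 ≤ ∑ x ∈ s, ∑ z ∈ s, a x * a z * K x z := by
  let e : Fin s.card ≃ s := s.equivFin.symm
  have sum_reindex (g : X → ℝ) : ∑ i, g (e i) = ∑ x ∈ s, g x := by
    rw [e.sum_comp fun x : s ↦ g x, Finset.sum_coe_sort]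
  simp only [← sum_reindex]
  exact hK.2 s.card (fun i ↦ e i) fun i ↦ a (e i)

theorem isPSDKernel_iff_posSemidef {X : Type*} {K : X → X → ℝ} :
    IsPSDKernel K ↔ (Matrix.of K).PosSemidef := by
  constructor
  · intro hK
    refine ⟨Matrix.IsHermitian.ext fun x z ↦ hK.1 z x, fun a ↦ ?_⟩
    simpa only [Finsupp.sum, star_trivial, Matrix.of_apply, mul_right_comm]
      using hK.sum_finset_nonneg a.support a
  · intro hK
    refine ⟨fun x z ↦ hK.isHermitian.apply z x, fun n x a ↦ ?_⟩
    simpa [dotProduct, Matrix.mulVec, Finset.mul_sum, mul_assoc, mul_comm, mul_left_comm]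
      using (hK.submatrix x).dotProduct_mulVec_nonneg a

theorem exp_psd_kernel_general {X 𝕜 : Type*} [RCLike 𝕜] {K : Matrix X X 𝕜} (hK : K.PosSemidef) :
    (K.map NormedSpace.exp).PosSemidef :=
  posSemidef_map_of_hasSum_pow hK (c := fun k ↦ (k ! : ℝ)⁻¹) (fun _ ↦ by positivity)
    fun x z ↦ NormedSpace.exp_series_hasSum_exp' (K x z)

theorem exp_psd_kernel {X : Type*} (K : X → X → ℝ) (hK : IsPSDKernel K) :
    IsPSDKernel (fun x z => Real.exp (K x z)) := by
  rw [isPSDKernel_iff_posSemidef, Real.exp_eq_exp_ℝ]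
  exact exp_psd_kernel_general (isPSDKernel_iff_posSemidef.1 hK)
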